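/- Let n ≥ 1, N ∈ ℕ, τ > 0, and let v_1, …, v_N : ℝⁿ → ℝⁿ be Lipschitz maps with Lipschitz constants L_1, …, L_N ≥ 0 respectively. Then the composition Φ_N := (id + τ·v_N) ∘ ⋯ ∘ (id + τ·v_1) is Lipschitz with constant at most exp( √(N·τ) · √( Σ_{l=1}^{N} τ·L_l² ) ). -/

import Mathlib

/-- The discrete flow map `Φ_k = (id + τ v_k) ∘ ⋯ ∘ (id + τ v_1)`. -/
noncomputable def discreteFlow {n : ℕ} (τ : ℝ)
    (v : ℕ → EuclideanSpace ℝ (Fin n) → EuclideanSpace ℝ (Fin n)) :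
    ℕ → EuclideanSpace ℝ (Fin n) → EuclideanSpace ℝ (Fin n)
  | 0 => id
  | (k + 1) => fun x => discreteFlow τ v k x + τ • v (k + 1) (discreteFlow τ v k x)

/-- **Uniform Lipschitz bound on the discrete flow map** (paper, Section 4.1):
if each `v_l` is `L_l`-Lipschitz, then `Φ_N = (id + τ v_N) ∘ ⋯ ∘ (id + τ v_1)` is
Lipschitz with constant at most `exp(√(Nτ)·√(∑_{l=1}^N τ L_l²))`. -/
theorem discreteFlow_lipschitz (n : ℕ) (hn : 1 ≤ n) (N : ℕ) (τ : ℝ) (hτ : 0 < τ)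
    (v : ℕ → EuclideanSpace ℝ (Fin n) → EuclideanSpace ℝ (Fin n)) (L : ℕ → ℝ)
    (hL : ∀ l, 1 ≤ l → l ≤ N → 0 ≤ L l ∧ ∀ x y, ‖v l x - v l y‖ ≤ L l * ‖x - y‖) :
    ∀ x y, ‖discreteFlow τ v N x - discreteFlow τ v N y‖ ≤
      Real.exp (Real.sqrt ((N : ℝ) * τ) *
        Real.sqrt (∑ l ∈ Finset.Icc 1 N, τ * L l ^ 2)) * ‖x - y‖ := by
  intro x y
  have key : ∀ k, k ≤ N → ‖discreteFlow τ v k x - discreteFlow τ v k y‖ ≤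
      Real.exp (∑ l ∈ Finset.Icc 1 k, τ * L l) * ‖x - y‖ := by
    intro k
    induction k with
    | zero => intro _; simp [discreteFlow]
    | succ k ih =>
      intro hk
      have ih' := ih (by omega)
      obtain ⟨h0, h1⟩ := hL (k + 1) (by omega) hk
      set a := discreteFlow τ v k x with ha
      set b := discreteFlow τ v k y with hb
      have e : discreteFlow τ v (k + 1) x - discreteFlow τ v (k + 1) y
          = (a - b) + τ • (v (k + 1) a - v (k + 1) b) := by
        simp only [discreteFlow, ← ha, ← hb, smul_sub]
        abel
      rw [e, Finset.sum_Icc_succ_top (by omega), Real.exp_add]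
      have h2 : ‖τ • (v (k + 1) a - v (k + 1) b)‖ ≤ τ * (L (k + 1) * ‖a - b‖) := by
        rw [norm_smul, Real.norm_of_nonneg hτ.le]
        exact mul_le_mul_of_nonneg_left (h1 a b) hτ.le
      have h3 := Real.add_one_le_exp (τ * L (k + 1))
      calc ‖(a - b) + τ • (v (k + 1) a - v (k + 1) b)‖
          ≤ ‖a - b‖ + τ * (L (k + 1) * ‖a - b‖) := (norm_add_le _ _).trans (by linarith)
        _ = (τ * L (k + 1) + 1) * ‖a - b‖ := by ring
        _ ≤ Real.exp (τ * L (k + 1)) * ‖a - b‖ :=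
            mul_le_mul_of_nonneg_right h3 (norm_nonneg _)
        _ ≤ Real.exp (τ * L (k + 1)) *
              (Real.exp (∑ l ∈ Finset.Icc 1 k, τ * L l) * ‖x - y‖) :=
            mul_le_mul_of_nonneg_left ih' (Real.exp_pos _).le
        _ = _ := by ring
  refine (key N le_rfl).trans (mul_le_mul_of_nonneg_right (Real.exp_le_exp.mpr ?_) (norm_nonneg _))
  rw [← Real.sqrt_mul (by positivity)]
  apply Real.le_sqrt_of_sq_le
  have h := sq_sum_le_card_mul_sum_sq (s := Finset.Icc 1 N) (f := L)
  rw [Nat.card_Icc, Nat.add_sub_cancel] at h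
  rw [← Finset.mul_sum, ← Finset.mul_sum, mul_pow]
  calc τ ^ 2 * (∑ l ∈ Finset.Icc 1 N, L l) ^ 2
      ≤ τ ^ 2 * (N * ∑ l ∈ Finset.Icc 1 N, L l ^ 2) :=
        mul_le_mul_of_nonneg_left h (sq_nonneg _)
    _ = _ := by ring
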